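/- arXiv:math/9810018 — 2 statements merged into one kernel-verified Lean document; each statement's English description precedes it below -/
import Mathlib

section
/- For all integers L ≥ 0 and all integers a, T_1(L,a) = ∑_{k=0}^{L} (−1)^{L−k} q^{binom(L−k,2)+binom(a,2)−binom(L,2)} · (1+q^a)/(1+q^k) · [L choose k]_q · [2k choose k−a]_q. -/
open Finset

/-- The variable `q`, realized as the generator of the field of rational functions over `ℚ`. -/
noncomputable def qq : RatFunc ℚ := RatFunc.X

/-- `(x)_n = ∏_{j=1}^n (1 - x^j)`. -/
noncomputable def qPoch (x : RatFunc ℚ) (n : ℕ) : RatFunc ℚ :=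
  ∏ j ∈ Finset.range n, (1 - x ^ (j + 1))

/-- Gaussian binomial coefficient `[n choose k]_x`, zero unless `0 ≤ k ≤ n`. -/
noncomputable def qBin (x : RatFunc ℚ) (n k : ℤ) : RatFunc ℚ :=
  if 0 ≤ k ∧ k ≤ n then qPoch x n.toNat / (qPoch x k.toNat * qPoch x (n - k).toNat) else 0

/-- The `q`-trinomial coefficient `[L, b; a]_2` in base `x`. -/
noncomputable def qTri (x : RatFunc ℚ) (L : ℕ) (b a : ℤ) : RatFunc ℚ :=
  ∑ k ∈ Finset.range (L + 1),
    x ^ ((k : ℤ) * (k + b)) * qBin x (L : ℤ) (k : ℤ) * qBin x ((L : ℤ) - k) ((k : ℤ) + a)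

/-- The `q`-trinomial `T_n(L, a)`, written in terms of `s = q^{1/2}` (so the base is `s^2`):
`T_n(L,a) = ∑ s^{r(r-n)} (s²)_L / ((s²)_{(L-a-r)/2} (s²)_{(L+a-r)/2} (s²)_r)`,
the sum over `r ≥ 0` with `L - a - r` even and `r ≤ L - |a|`; zero for `|a| > L`. -/
noncomputable def qT (s : RatFunc ℚ) (n : ℤ) (L : ℕ) (a : ℤ) : RatFunc ℚ :=
  ∑ r ∈ Finset.range (L + 1),
    if Even ((L : ℤ) - a - r) ∧ (r : ℤ) ≤ (L : ℤ) - |a| then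
      s ^ ((r : ℤ) * ((r : ℤ) - n)) * qPoch (s ^ 2) L /
        (qPoch (s ^ 2) (((L : ℤ) - a - r) / 2).toNat *
          qPoch (s ^ 2) (((L : ℤ) + a - r) / 2).toNat * qPoch (s ^ 2) r)
    else 0

/-- The Cartan matrix of the Lie algebra `A_n`. -/
def cartanA (n : ℕ) (i j : Fin n) : ℤ :=
  if i = j then 2 else if |(i : ℤ) - (j : ℤ)| = 1 then -1 else 0

/-!
Write `(q)_n = ∏_{j=1}^n (1 - q^j)` and `(u;q)_k = ∏_{j<k} (1 - u q^j)`. The Laurent polynomials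
`H_L(z) = ∑_a T_1(L,a) z^a / (q)_L` have generating function `(-t;q)_∞ / ((tz;q)_∞ (t/z;q)_∞)` in
`t`, so they are the continuous big `q`-Hermite polynomials with parameter `-1`, normalized by
`(q)_L`; they are determined by `H_{-1} = 0`, `H_0 = 1` and
`(1 - q^{L+1}) H_{L+1} = (z + z⁻¹ + q^L) H_L - H_{L-1}`.

The identity is the expansion of `H_L` in the basis `φ_k = (-z;q)_k (-z⁻¹;q)_k`, whose coefficients
are `q`-binomial by the finite Jacobi triple product. Multiplication by `z + z⁻¹` acts on this basis
by `q^k (z + z⁻¹) φ_k = φ_{k+1} - (1 + q^{2k}) φ_k`, so the right-hand side satisfies the same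
recurrence once its expansion coefficients satisfy the corresponding recurrence in `L` and `k`.
-/

section QAnalogues

variable {K : Type*} [Field K] {q s : K}

/-- The `q`-Pochhammer symbol `(q)_n = ∏_{j=1}^n (1 - q^j)` over an arbitrary field. -/
def qPochhammer (q : K) (n : ℕ) : K :=
  ∏ j ∈ range n, (1 - q ^ (j + 1))

/-- The Gaussian binomial coefficient over an arbitrary field, zero unless `0 ≤ k ≤ n`. -/
def gaussBinom (q : K) (n k : ℤ) : K :=
  if 0 ≤ k ∧ k ≤ n then
    qPochhammer q n.toNat / (qPochhammer q k.toNat * qPochhammer q (n - k).toNat)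
  else 0

/-- `1/(q)_n` for integers `n`, with the usual convention that it vanishes for negative `n`; it
makes the boundary terms of all the recurrences below disappear. -/
def qPochhammerInv (q : K) (n : ℤ) : K :=
  if 0 ≤ n then (qPochhammer q n.toNat)⁻¹ else 0

/-- The triangular power `q^{n(n-1)/2}` in base `q = s²`. -/
def qTriangular (s : K) (n : ℤ) : K :=
  s ^ (n * (n - 1))

/-- The `q`-trinomial `T_1(L,a)` in base `q = s²` over an arbitrary field. -/
def qTrinomialOne (s : K) (L : ℕ) (a : ℤ) : K :=
  ∑ r ∈ range (L + 1),
    if Even ((L : ℤ) - a - r) ∧ (r : ℤ) ≤ (L : ℤ) - |a| then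
      qTriangular s r * qPochhammer (s ^ 2) L /
        (qPochhammer (s ^ 2) (((L : ℤ) - a - r) / 2).toNat *
          qPochhammer (s ^ 2) (((L : ℤ) + a - r) / 2).toNat * qPochhammer (s ^ 2) r)
    else 0

lemma one_sub_pow_ne_zero (hq : ¬IsOfFinOrder q) {n : ℕ} (hn : 0 < n) : 1 - q ^ n ≠ 0 :=
  fun h ↦ hq (isOfFinOrder_iff_pow_eq_one.2 ⟨n, hn, (sub_eq_zero.1 h).symm⟩)

lemma one_add_pow_ne_zero [NeZero (2 : K)] (hq : ¬IsOfFinOrder q) (n : ℕ) : 1 + q ^ n ≠ 0 := by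
  intro h
  rcases n.eq_zero_or_pos with rfl | hn
  · exact two_ne_zero (α := K) (by linear_combination h)
  · refine one_sub_pow_ne_zero hq (n := 2 * n) (by omega) ?_
    linear_combination (1 - q ^ n) * h

lemma qPochhammer_succ (q : K) (n : ℕ) :
    qPochhammer q (n + 1) = qPochhammer q n * (1 - q ^ (n + 1)) :=
  prod_range_succ _ n

lemma qPochhammerInv_natCast (q : K) (n : ℕ) : qPochhammerInv q n = (qPochhammer q n)⁻¹ := by
  simp [qPochhammerInv]

lemma qPochhammerInv_zero (q : K) : qPochhammerInv q 0 = 1 := by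
  simp [qPochhammerInv, qPochhammer]

lemma qPochhammerInv_of_neg (q : K) {n : ℤ} (hn : n < 0) : qPochhammerInv q n = 0 :=
  if_neg hn.not_ge

lemma qPochhammerInv_sub_one (hq : ¬IsOfFinOrder q) (n : ℤ) :
    qPochhammerInv q (n - 1) = (1 - q ^ n) * qPochhammerInv q n := by
  rcases lt_trichotomy n 0 with hn | rfl | hn
  · rw [qPochhammerInv_of_neg q hn, qPochhammerInv_of_neg q (by omega), mul_zero]
  · rw [qPochhammerInv_of_neg q (by omega), zpow_zero, sub_self, zero_mul]
  · obtain ⟨m, rfl⟩ : ∃ m : ℕ, n = (m + 1 : ℕ) := ⟨(n - 1).toNat, by omega⟩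
    have hm : 1 - q ^ (m + 1) ≠ 0 := one_sub_pow_ne_zero hq m.succ_pos
    rw [show ((m + 1 : ℕ) : ℤ) - 1 = m by omega, qPochhammerInv_natCast, qPochhammerInv_natCast,
      qPochhammer_succ, mul_inv_rev, zpow_natCast, mul_inv_cancel_left₀ hm]

lemma gaussBinom_natCast (q : K) (n : ℕ) (k : ℤ) :
    gaussBinom q n k = qPochhammer q n * qPochhammerInv q k * qPochhammerInv q (n - k) := by
  unfold gaussBinom
  split_ifs with h
  · rw [qPochhammerInv, qPochhammerInv, if_pos h.1, if_pos (by omega), Int.toNat_natCast,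
      div_eq_mul_inv, mul_inv, mul_assoc]
  · rcases lt_or_ge k 0 with hk | hk
    · rw [qPochhammerInv_of_neg q hk, mul_zero, zero_mul]
    · rw [qPochhammerInv_of_neg q (n := n - k) (by omega), mul_zero]

lemma qTriangular_ne_zero (hs : s ≠ 0) (n : ℤ) : qTriangular s n ≠ 0 :=
  zpow_ne_zero _ hs

lemma qTriangular_zero (s : K) : qTriangular s 0 = 1 := by
  simp [qTriangular]

lemma qTriangular_add_one (hs : s ≠ 0) (n : ℤ) :
    qTriangular s (n + 1) = qTriangular s n * (s ^ 2) ^ n := by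
  rw [qTriangular, qTriangular, ← zpow_natCast s 2, ← zpow_mul, ← zpow_add₀ hs]
  congr 1
  push_cast
  ring

lemma qTriangular_sub_one (hs : s ≠ 0) (n : ℤ) :
    qTriangular s (n - 1) = qTriangular s n / (s ^ 2) ^ (n - 1) := by
  rw [eq_div_iff (zpow_ne_zero _ (pow_ne_zero 2 hs)), ← qTriangular_add_one hs, sub_add_cancel]

lemma sum_range_intCast_sub_one {M : Type*} [AddCommMonoid M] (N : ℕ) (f : ℤ → M)
    (hfirst : f (-1) = 0) (hlast : f (N - 1) = 0) :
    ∑ i ∈ range N, f (i - 1) = ∑ i ∈ range N, f i := by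
  have hsucc := sum_range_succ (fun i : ℕ ↦ f (i - 1)) N
  rw [sum_range_succ'] at hsucc
  simpa [hfirst, hlast] using hsucc.symm

end QAnalogues

section Recurrence

variable {K : Type*} [Field K] {q : K}

/-- The three-term recurrence `(1 - q^{L+1}) H_{L+1} = (z + z⁻¹ + q^L) H_L - H_{L-1}` of the
normalized continuous big `q`-Hermite polynomials with parameter `-1`, written for the coefficients
`f L a` of `z^a` and restricted to `L + 1 < N`, so that sums over the fixed range `k < N` can be
used for all these `L` at once. -/
def SatisfiesBigQHermiteRec (q : K) (N : ℕ) (f : ℤ → ℤ → K) : Prop :=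
  ∀ L a : ℤ, L + 1 < N →
    (1 - q ^ (L + 1)) * f (L + 1) a = f L (a - 1) + f L (a + 1) + q ^ L * f L a - f (L - 1) a

theorem SatisfiesBigQHermiteRec.eq_of_initial (hq : ¬IsOfFinOrder q) {N : ℕ} {f g : ℤ → ℤ → K}
    (hf : SatisfiesBigQHermiteRec q N f) (hg : SatisfiesBigQHermiteRec q N g)
    (hneg : f (-1) = g (-1)) (hzero : f 0 = g 0) {L : ℕ} (hL : L < N) : f L = g L := by
  suffices f L = g L ∧ f (L - 1) = g (L - 1) from this.1
  induction L with
  | zero => exact ⟨hzero, by simpa using hneg⟩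
  | succ L ih =>
    obtain ⟨hcur, hprev⟩ := ih (by omega)
    refine ⟨funext fun a ↦ ?_, by simpa using hcur⟩
    have hpivot : 1 - q ^ ((L : ℤ) + 1) ≠ 0 := mod_cast one_sub_pow_ne_zero hq L.succ_pos
    push_cast
    apply mul_left_cancel₀ hpivot
    rw [hf L a (by omega), hg L a (by omega), hcur, hprev]

end Recurrence

section TrinomialSide

variable {K : Type*} [Field K] {s : K}

/-- The summand `q^{r(r-1)/2} / ((q)_r (q)_i (q)_j)` of `T_1(L,a) / (q)_L`, where `L = r + i + j`
and `a = j - i`, in base `q = s²`. -/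
def trinomialTerm (s : K) (r i j : ℤ) : K :=
  qTriangular s r *
    (qPochhammerInv (s ^ 2) r * qPochhammerInv (s ^ 2) i * qPochhammerInv (s ^ 2) j)

/-- `T_1(L,a) / (q)_L`, summed over the number `i` of factors `z⁻¹`; the sum is complete when
`L < N`. -/
def trinomialSum (s : K) (N : ℕ) (L a : ℤ) : K :=
  ∑ i ∈ range N, trinomialTerm s (L - a - 2 * i) i (i + a)

lemma trinomialTerm_eq_zero (s : K) {r i j : ℤ} (h : r < 0 ∨ i < 0 ∨ j < 0) :
    trinomialTerm s r i j = 0 := by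
  unfold trinomialTerm
  rcases h with h | h | h <;> simp [qPochhammerInv_of_neg _ h]

lemma trinomialTerm_natCast (s : K) (r i j : ℕ) :
    trinomialTerm s r i j = qTriangular s r /
      (qPochhammer (s ^ 2) i * qPochhammer (s ^ 2) j * qPochhammer (s ^ 2) r) := by
  simp only [trinomialTerm, qPochhammerInv_natCast]
  ring

-- Divided by `trinomialTerm s r i j`, this is
-- `1 - xyz = (1 - y) + (1 - x) + xy(1 - z) - (1 - x)(1 - y)` at `x = q^i`, `y = q^j`, `z = q^r`.
lemma trinomialTerm_rec (hs : s ≠ 0) (hq : ¬IsOfFinOrder (s ^ 2)) (r i j : ℤ) :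
    (1 - (s ^ 2) ^ (r + i + j)) * trinomialTerm s r i j =
      trinomialTerm s r i (j - 1) + trinomialTerm s r (i - 1) j +
        (s ^ 2) ^ (r + i + j - 1) * trinomialTerm s (r - 1) i j -
          trinomialTerm s r (i - 1) (j - 1) := by
  have hq0 : s ^ 2 ≠ 0 := pow_ne_zero 2 hs
  simp only [trinomialTerm, qTriangular_sub_one hs, qPochhammerInv_sub_one hq]
  rw [show r + i + j - 1 = (r - 1) + i + j by ring]
  simp only [zpow_add₀ hq0]
  have hr : (s ^ 2) ^ r = s ^ 2 * (s ^ 2) ^ (r - 1) := by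
    rw [← zpow_one_add₀ hq0, add_sub_cancel]
  have hr0 : (s ^ 2) ^ (r - 1) ≠ 0 := zpow_ne_zero _ hq0
  generalize (s ^ 2) ^ (r - 1) = x at hr hr0 ⊢
  generalize (s ^ 2) ^ i = y, (s ^ 2) ^ j = z, (s ^ 2) ^ r = w
  field_simp
  ring

theorem trinomialSum_satisfiesBigQHermiteRec (hs : s ≠ 0) (hq : ¬IsOfFinOrder (s ^ 2)) (N : ℕ) :
    SatisfiesBigQHermiteRec (s ^ 2) N (trinomialSum s N) := by
  intro L a hL
  have hshift (L' a' : ℤ) (hL' : L' < N - 1) :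
      trinomialSum s N L' a' =
        ∑ i ∈ range N, trinomialTerm s (L' - a' - 2 * (i - 1)) (i - 1) (i - 1 + a') :=
    (sum_range_intCast_sub_one N (fun i ↦ trinomialTerm s (L' - a' - 2 * i) i (i + a'))
      (trinomialTerm_eq_zero s (by omega)) (trinomialTerm_eq_zero s (by omega))).symm
  rw [hshift L (a + 1) (by omega), hshift (L - 1) a (by omega)]
  simp only [trinomialSum, mul_sum]
  rw [← sum_add_distrib, ← sum_add_distrib, ← sum_sub_distrib]
  refine sum_congr rfl fun i _ ↦ ?_
  have hterm := trinomialTerm_rec hs hq (L + 1 - a - 2 * i) i (i + a)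
  rw [show L + 1 - a - 2 * i + i + (i + a) = L + 1 by ring, add_sub_cancel_right] at hterm
  rw [hterm, show L - (a - 1) - 2 * i = L + 1 - a - 2 * i by ring,
    show L - (a + 1) - 2 * (i - 1) = L + 1 - a - 2 * i by ring,
    show L - 1 - a - 2 * (i - 1) = L + 1 - a - 2 * i by ring,
    show L - a - 2 * i = L + 1 - a - 2 * i - 1 by ring,
    show (i : ℤ) + (a - 1) = i + a - 1 by ring, show (i : ℤ) - 1 + (a + 1) = i + a by ring,
    show (i : ℤ) - 1 + a = i + a - 1 by ring]

lemma trinomialSum_neg_one (s : K) (N : ℕ) : trinomialSum s N (-1) = 0 :=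
  funext fun _ ↦ sum_eq_zero fun _ _ ↦ trinomialTerm_eq_zero s (by omega)

lemma trinomialSum_zero (s : K) (N : ℕ) : trinomialSum s (N + 1) 0 = Pi.single 0 1 := by
  funext a
  rw [trinomialSum, sum_eq_single 0 (fun i _ hi ↦ trinomialTerm_eq_zero s (by omega)) (by simp)]
  rcases eq_or_ne a 0 with rfl | ha
  · simp [trinomialTerm, qTriangular_zero, qPochhammerInv_zero]
  · rw [trinomialTerm_eq_zero s (by omega), Pi.single_eq_of_ne ha]

theorem qTrinomialOne_eq_mul_trinomialSum (s : K) (L : ℕ) (a : ℤ) :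
    qTrinomialOne s L a = qPochhammer (s ^ 2) L * trinomialSum s (L + 1) L a := by
  have hsupport : trinomialSum s (L + 1) L a =
      ∑ i ∈ range (L + 1) with 0 ≤ (L : ℤ) - a - 2 * (i : ℕ) ∧ 0 ≤ ((i : ℕ) : ℤ) + a,
        trinomialTerm s (L - a - 2 * i) i (i + a) := by
    refine (sum_filter_of_ne fun i _ hi ↦ ?_).symm
    contrapose! hi
    exact trinomialTerm_eq_zero s (by omega)
  rw [hsupport, mul_sum, qTrinomialOne, ← sum_filter]
  refine sum_nbij' (fun r ↦ ((L - a - r) / 2).toNat) (fun i ↦ (L - a - 2 * i).toNat)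
    ?_ ?_ ?_ ?_ ?_
  all_goals simp only [mem_filter, mem_range, Int.even_iff, le_sub_comm, abs_le, and_imp]
  · omega
  · omega
  · omega
  · omega
  · intro r _ hparity hlow hupp
    obtain ⟨i, hi⟩ : ∃ i : ℕ, (L - a - r) / 2 = (i : ℤ) := ⟨((L - a - r) / 2).toNat, by omega⟩
    obtain ⟨j, hj⟩ : ∃ j : ℕ, (L + a - r) / 2 = (j : ℤ) := ⟨((L + a - r) / 2).toNat, by omega⟩
    simp only [hi, hj, Int.toNat_natCast]
    rw [show (L : ℤ) - a - 2 * i = r by omega, show (i : ℤ) + a = j by omega,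
      trinomialTerm_natCast]
    ring

end TrinomialSide

section AskeyWilsonSide

variable {K : Type*} [Field K] {s : K}

/-- The coefficient of `z^a` in the Askey–Wilson basis element `(-z;q)_k (-z⁻¹;q)_k`, as given by
the finite Jacobi triple product, in base `q = s²`. -/
def askeyWilsonCoeff (s : K) (k a : ℤ) : K :=
  qTriangular s a * ((1 + (s ^ 2) ^ a) / (1 + (s ^ 2) ^ k)) * gaussBinom (s ^ 2) (2 * k) (k - a)

/-- The coefficient of `(-z;q)_k (-z⁻¹;q)_k` in the `L`-th continuous big `q`-Hermite polynomial
with parameter `-1` divided by `(q)_L`, in base `q = s²`. -/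
def bigQHermiteCoeff (s : K) (L k : ℤ) : K :=
  (-1) ^ (L - k) * (qTriangular s (L - k) / qTriangular s L) *
    (qPochhammerInv (s ^ 2) k * qPochhammerInv (s ^ 2) (L - k))

/-- The coefficient of `z^a` in the expansion with coefficients `bigQHermiteCoeff`; the sum is
complete when `L < N`. -/
def askeyWilsonSum (s : K) (N : ℕ) (L a : ℤ) : K :=
  ∑ k ∈ range N, bigQHermiteCoeff s L k * askeyWilsonCoeff s k a

lemma askeyWilsonCoeff_natCast (s : K) (k : ℕ) (a : ℤ) :
    askeyWilsonCoeff s k a = qTriangular s a * ((1 + (s ^ 2) ^ a) / (1 + (s ^ 2) ^ k)) *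
      (qPochhammer (s ^ 2) (2 * k) * qPochhammerInv (s ^ 2) (k - a) *
        qPochhammerInv (s ^ 2) (k + a)) := by
  have hbinom := gaussBinom_natCast (s ^ 2) (2 * k) (k - a)
  rw [show ((2 * k : ℕ) : ℤ) - (k - a) = k + a by push_cast; ring] at hbinom
  push_cast at hbinom
  rw [askeyWilsonCoeff, hbinom, zpow_natCast]

lemma askeyWilsonCoeff_zero [NeZero (2 : K)] (s : K) :
    askeyWilsonCoeff s 0 = Pi.single 0 1 := by
  funext a
  rcases eq_or_ne a 0 with rfl | ha
  · have htwo : (1 + 1 : K) ≠ 0 := by simpa [one_add_one_eq_two] using two_ne_zero (α := K)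
    simp [askeyWilsonCoeff, qTriangular_zero, gaussBinom, qPochhammer, htwo]
  · rw [askeyWilsonCoeff, gaussBinom, if_neg (by omega), mul_zero, Pi.single_eq_of_ne ha]

-- Multiplication of `(-z;q)_k (-z⁻¹;q)_k` by its next factors `(1 + z q^k) (1 + z⁻¹ q^k)`.
lemma askeyWilsonCoeff_add_one [NeZero (2 : K)] (hs : s ≠ 0) (hq : ¬IsOfFinOrder (s ^ 2))
    (k : ℕ) (a : ℤ) :
    askeyWilsonCoeff s (k + 1) a = (1 + ((s ^ 2) ^ k) ^ 2) * askeyWilsonCoeff s k a +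
      (s ^ 2) ^ k * (askeyWilsonCoeff s k (a - 1) + askeyWilsonCoeff s k (a + 1)) := by
  have hq0 : s ^ 2 ≠ 0 := pow_ne_zero 2 hs
  have hk : 1 + (s ^ 2) ^ k ≠ 0 := one_add_pow_ne_zero hq k
  have hk' : 1 + (s ^ 2) ^ (k + 1) ≠ 0 := one_add_pow_ne_zero hq (k + 1)
  have ha : (s ^ 2) ^ a ≠ 0 := zpow_ne_zero a hq0
  have hnext := askeyWilsonCoeff_natCast s (k + 1) a
  push_cast at hnext
  rw [hnext]
  simp only [askeyWilsonCoeff_natCast]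
  rw [show 2 * (k + 1) = 2 * k + 1 + 1 by ring, qPochhammer_succ, qPochhammer_succ,
    show (k : ℤ) - (a - 1) = k + 1 - a by ring, show (k : ℤ) + (a - 1) = k + 1 + a - 1 - 1 by ring,
    show (k : ℤ) - (a + 1) = k + 1 - a - 1 - 1 by ring, show (k : ℤ) + (a + 1) = k + 1 + a by ring,
    show (k : ℤ) - a = k + 1 - a - 1 by ring, show (k : ℤ) + a = k + 1 + a - 1 by ring]
  simp only [qPochhammerInv_sub_one hq, qTriangular_add_one hs, qTriangular_sub_one hs,
    zpow_add₀ hq0, zpow_sub₀ hq0, zpow_one, zpow_natCast]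
  rw [show (s ^ 2) ^ (2 * k + 1) = ((s ^ 2) ^ k) ^ 2 * s ^ 2 by ring,
    show (s ^ 2) ^ (2 * k + 1 + 1) = ((s ^ 2) ^ k * s ^ 2) ^ 2 by ring, pow_succ (s ^ 2) k]
  rw [pow_succ] at hk'
  generalize s ^ 2 = q at *
  generalize q ^ a = x, q ^ k = y at *
  generalize qPochhammerInv q (k + 1 - a) = u, qPochhammerInv q (k + 1 + a) = v
  field_simp
  ring

lemma bigQHermiteCoeff_eq_zero (s : K) {L k : ℤ} (h : k < 0 ∨ L < k) :
    bigQHermiteCoeff s L k = 0 := by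
  unfold bigQHermiteCoeff
  rcases h with h | h
  · rw [qPochhammerInv_of_neg _ h, zero_mul, mul_zero]
  · rw [qPochhammerInv_of_neg _ (sub_neg.2 h), mul_zero, mul_zero]

lemma bigQHermiteCoeff_zero_zero (s : K) : bigQHermiteCoeff s 0 0 = 1 := by
  simp [bigQHermiteCoeff, qTriangular_zero, qPochhammerInv_zero]

lemma bigQHermiteCoeff_rec (hs : s ≠ 0) (hq : ¬IsOfFinOrder (s ^ 2)) (L k : ℤ) :
    (1 - (s ^ 2) ^ (L + 1)) * bigQHermiteCoeff s (L + 1) k =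
      ((s ^ 2) ^ (k - 1))⁻¹ * bigQHermiteCoeff s L (k - 1) -
        (((s ^ 2) ^ k)⁻¹ + (s ^ 2) ^ k - (s ^ 2) ^ L) * bigQHermiteCoeff s L k -
          bigQHermiteCoeff s (L - 1) k := by
  have hq0 : s ^ 2 ≠ 0 := pow_ne_zero 2 hs
  have hneg : (-1 : K) ≠ 0 := neg_ne_zero.2 one_ne_zero
  have hk : (s ^ 2) ^ k ≠ 0 := zpow_ne_zero k hq0
  have hL : (s ^ 2) ^ L ≠ 0 := zpow_ne_zero L hq0
  have htri : qTriangular s L ≠ 0 := qTriangular_ne_zero hs L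
  have hinv : qPochhammerInv (s ^ 2) (L - k) =
      (1 - (s ^ 2) ^ (L - k + 1)) * qPochhammerInv (s ^ 2) (L - k + 1) := by
    rw [← qPochhammerInv_sub_one hq, add_sub_cancel_right]
  unfold bigQHermiteCoeff
  rw [show L + 1 - k = L - k + 1 by ring, show L - (k - 1) = L - k + 1 by ring,
    show L - 1 - k = L - k - 1 by ring]
  simp only [qPochhammerInv_sub_one hq, hinv, qTriangular_add_one hs, qTriangular_sub_one hs,
    zpow_add₀ hq0, zpow_sub₀ hq0, zpow_add₀ hneg, zpow_sub₀ hneg, zpow_one]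
  generalize s ^ 2 = q at *
  generalize q ^ k = y, q ^ L = x at *
  generalize (-1 : K) ^ L / (-1) ^ k = ε
  field_simp
  ring

theorem askeyWilsonSum_satisfiesBigQHermiteRec [NeZero (2 : K)] (hs : s ≠ 0)
    (hq : ¬IsOfFinOrder (s ^ 2)) (N : ℕ) :
    SatisfiesBigQHermiteRec (s ^ 2) N (askeyWilsonSum s N) := by
  intro L a hL
  have hshift : ∑ k ∈ range N, ((s ^ 2) ^ ((k : ℤ) - 1))⁻¹ * bigQHermiteCoeff s L (k - 1) *
        askeyWilsonCoeff s k a =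
      ∑ k ∈ range N, ((s ^ 2) ^ (k : ℤ))⁻¹ * bigQHermiteCoeff s L k *
        askeyWilsonCoeff s (k + 1) a := by
    simpa only [sub_add_cancel] using sum_range_intCast_sub_one N
      (fun k ↦ ((s ^ 2) ^ k)⁻¹ * bigQHermiteCoeff s L k * askeyWilsonCoeff s (k + 1) a)
      (by simp [bigQHermiteCoeff_eq_zero s (L := L) (k := -1) (by omega)])
      (by simp [bigQHermiteCoeff_eq_zero s (L := L) (k := N - 1) (by omega)])
  have hterm (k : ℕ) : ((s ^ 2) ^ (k : ℤ))⁻¹ * bigQHermiteCoeff s L k *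
        askeyWilsonCoeff s (k + 1) a =
      bigQHermiteCoeff s L k * (askeyWilsonCoeff s k (a - 1) + askeyWilsonCoeff s k (a + 1) +
        (((s ^ 2) ^ (k : ℤ))⁻¹ + (s ^ 2) ^ (k : ℤ)) * askeyWilsonCoeff s k a) := by
    have hk : (s ^ 2) ^ k ≠ 0 := pow_ne_zero k (pow_ne_zero 2 hs)
    rw [askeyWilsonCoeff_add_one hs hq, zpow_natCast]
    field_simp
    ring
  simp only [askeyWilsonSum, mul_sum, ← mul_assoc, bigQHermiteCoeff_rec hs hq, sub_mul,
    sum_sub_distrib, hshift, hterm]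
  simp only [← sum_add_distrib, ← sum_sub_distrib]
  exact sum_congr rfl fun k _ ↦ by ring

lemma askeyWilsonSum_neg_one (s : K) (N : ℕ) : askeyWilsonSum s N (-1) = 0 :=
  funext fun _ ↦ sum_eq_zero fun _ _ ↦ by
    rw [bigQHermiteCoeff_eq_zero s (by omega), zero_mul]

lemma askeyWilsonSum_zero [NeZero (2 : K)] (s : K) (N : ℕ) :
    askeyWilsonSum s (N + 1) 0 = Pi.single 0 1 := by
  funext a
  rw [askeyWilsonSum, sum_eq_single 0
    (fun k _ hk ↦ by rw [bigQHermiteCoeff_eq_zero s (by omega), zero_mul]) (by simp)]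
  rw [Nat.cast_zero, bigQHermiteCoeff_zero_zero, one_mul, askeyWilsonCoeff_zero]

lemma qPochhammer_mul_bigQHermiteCoeff (s : K) {L k : ℕ} (hk : k ≤ L) :
    qPochhammer (s ^ 2) L * bigQHermiteCoeff s L k =
      (-1) ^ (L - k) * (qTriangular s (L - k) / qTriangular s L) * gaussBinom (s ^ 2) L k := by
  rw [bigQHermiteCoeff, gaussBinom_natCast, ← Nat.cast_sub hk, zpow_natCast]
  ring

end AskeyWilsonSide

theorem trinomialSum_eq_askeyWilsonSum {K : Type*} [Field K] [NeZero (2 : K)] {s : K}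
    (hs : s ≠ 0) (hq : ¬IsOfFinOrder (s ^ 2)) {N L : ℕ} (hL : L < N) :
    trinomialSum s N L = askeyWilsonSum s N L := by
  obtain ⟨M, rfl⟩ : ∃ M, N = M + 1 := ⟨N - 1, by omega⟩
  exact (trinomialSum_satisfiesBigQHermiteRec hs hq _).eq_of_initial hq
    (askeyWilsonSum_satisfiesBigQHermiteRec hs hq _)
    (by rw [trinomialSum_neg_one, askeyWilsonSum_neg_one])
    (by rw [trinomialSum_zero, askeyWilsonSum_zero]) hL

theorem stmt6_general {K : Type*} [Field K] [NeZero (2 : K)] {s : K} (hs : s ≠ 0)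
    (hfin : ¬IsOfFinOrder s) (L : ℕ) (a : ℤ) :
    qTrinomialOne s L a =
      ∑ k ∈ range (L + 1),
        (-1 : K) ^ (L - k) *
          s ^ (((L : ℤ) - k) * ((L : ℤ) - k - 1) + a * (a - 1) - (L : ℤ) * ((L : ℤ) - 1)) *
          ((1 + (s ^ 2) ^ a) / (1 + (s ^ 2) ^ k)) *
          gaussBinom (s ^ 2) L k * gaussBinom (s ^ 2) (2 * k) (k - a) := by
  have hq : ¬IsOfFinOrder (s ^ 2) := fun h ↦ hfin (h.of_pow two_ne_zero)
  rw [qTrinomialOne_eq_mul_trinomialSum, trinomialSum_eq_askeyWilsonSum hs hq L.lt_succ_self,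
    askeyWilsonSum, mul_sum]
  refine sum_congr rfl fun k hk ↦ ?_
  rw [← mul_assoc, qPochhammer_mul_bigQHermiteCoeff s (mem_range_succ_iff.1 hk), zpow_sub₀ hs,
    zpow_add₀ hs, askeyWilsonCoeff, zpow_natCast]
  unfold qTriangular
  ring

lemma not_isOfFinOrder_ratFunc_X {F : Type*} [Field F] :
    ¬IsOfFinOrder (RatFunc.X : RatFunc F) := by
  intro h
  obtain ⟨n, hn, hX⟩ := isOfFinOrder_iff_pow_eq_one.1 h
  exact RatFunc.transcendental_X.pow hn (hX ▸ isAlgebraic_one)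

theorem stmt6 (L : ℕ) (a : ℤ) :
    qT qq 1 L a =
      ∑ k ∈ Finset.range (L + 1),
        (-1 : RatFunc ℚ) ^ (L - k) *
          qq ^ (((L : ℤ) - k) * ((L : ℤ) - k - 1) + a * (a - 1) - (L : ℤ) * ((L : ℤ) - 1)) *
          ((1 + (qq ^ 2) ^ a) / (1 + (qq ^ 2) ^ k)) *
          qBin (qq ^ 2) (L : ℤ) (k : ℤ) * qBin (qq ^ 2) (2 * (k : ℤ)) ((k : ℤ) - a) :=
  stmt6_general RatFunc.X_ne_zero not_isOfFinOrder_ratFunc_X L a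
end

section
/- For every integer L ≥ 0, ∑_{m,n≥0} q^{(m²+n²)/2} [L−m choose n]_q [n choose m]_q = ∑_{j∈ℤ} (−1)^j q^{2j²+j/2} ( T_0(L,4j) + T_0(L,4j+1) ). -/
open Finset

/-!
Write `s = q^{1/2}`. Both sides satisfy `X_{L+2} = (1 + s^{2L+3}) X_{L+1} + s^{2L+2} X_L` and agree
for `L = 0, 1`.

For the left side the recurrence comes from applying one of the two `q`-Pascal rules to each
Gaussian binomial. For the right side, `T_n(N, a) / (q)_N` is the coefficient of `t^N z^a` in
`(-t q^{(1-n)/2}; q)_∞ / ((tz; q)_∞ (t/z; q)_∞)`, and the functional equations of this product give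
the Andrews–Baxter recurrences, which relate `T_0` and `T_1`. Summed against the theta weight
`(-1)^j s^{4j²+bj}`, they relate theta sums with different `b` and residues of `a` modulo `4`.
Quasi-periodicity under `j ↦ j + 1` wraps the residue around, so that a telescoping sum over one
period eliminates `T_1`.
-/

section General

lemma one_sub_pow_succ_ne_zero {R : Type*} [Ring R] {x : R} (hx : ¬IsOfFinOrder x) (n : ℕ) :
    1 - x ^ (n + 1) ≠ 0 :=
  fun h => hx (isOfFinOrder_iff_pow_eq_one.2 ⟨n + 1, n.succ_pos, (sub_eq_zero.1 h).symm⟩)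

lemma sq_zpow {G : Type*} [DivisionMonoid G] (x : G) (n : ℤ) : (x ^ 2) ^ n = x ^ (2 * n) := by
  rw [zpow_mul, zpow_ofNat]

lemma not_isOfFinOrder_sq {G : Type*} [Monoid G] {x : G} (hx : ¬IsOfFinOrder x) :
    ¬IsOfFinOrder (x ^ 2) := by
  simpa [isOfFinOrder_pow] using hx

lemma sum_range_natCast {M : Type*} [AddCommMonoid M] (f : ℤ → M) (L : ℕ) :
    ∑ n ∈ range (L + 1), f n = ∑ n ∈ Icc (0 : ℤ) L, f n := by
  rw [Int.Icc_eq_finset_map, sum_map]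
  exact sum_congr (by congr 1) fun n _ => by simp

end General

section InvPoch

variable {x : RatFunc ℚ}

/-- The reciprocal `1 / (x)_n` for `n : ℤ`, equal to zero for `n < 0`; this convention makes sums
of products of such factors range over all integers. -/
noncomputable def invPoch (x : RatFunc ℚ) (n : ℤ) : RatFunc ℚ :=
  if 0 ≤ n then (qPoch x n.toNat)⁻¹ else 0

lemma invPoch_natCast (x : RatFunc ℚ) (n : ℕ) : invPoch x n = (qPoch x n)⁻¹ := by
  simp [invPoch]

lemma invPoch_of_neg {n : ℤ} (hn : n < 0) : invPoch x n = 0 :=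
  if_neg hn.not_ge

lemma nonneg_of_invPoch_ne_zero {n : ℤ} (hn : invPoch x n ≠ 0) : 0 ≤ n := by
  contrapose! hn
  exact invPoch_of_neg hn

lemma qPoch_succ (x : RatFunc ℚ) (n : ℕ) :
    qPoch x (n + 1) = qPoch x n * (1 - x ^ (n + 1)) :=
  prod_range_succ _ n

lemma invPoch_sub_one (hx : ¬IsOfFinOrder x) (n : ℤ) :
    invPoch x (n - 1) = (1 - x ^ n) * invPoch x n := by
  rcases lt_trichotomy n 0 with hn | rfl | hn
  · rw [invPoch_of_neg hn, invPoch_of_neg (by lia), mul_zero]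
  · rw [invPoch_of_neg (by lia), zpow_zero, sub_self, zero_mul]
  · obtain ⟨m, rfl⟩ : ∃ m : ℕ, n = (m + 1 : ℕ) := ⟨(n - 1).toNat, by lia⟩
    have hm := one_sub_pow_succ_ne_zero hx m
    rw [show ((m + 1 : ℕ) : ℤ) - 1 = m by lia, zpow_natCast, invPoch_natCast, invPoch_natCast,
      qPoch_succ, mul_inv, mul_left_comm, mul_inv_cancel₀ hm, mul_one]

end InvPoch

section GaussianBinomial

variable {x : RatFunc ℚ}

lemma qBin_of_not {n k : ℤ} (h : ¬(0 ≤ k ∧ k ≤ n)) : qBin x n k = 0 :=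
  if_neg h

lemma qBin_eq_mul_invPoch (x : RatFunc ℚ) (n k : ℤ) :
    qBin x n k = qPoch x n.toNat * invPoch x k * invPoch x (n - k) := by
  unfold qBin invPoch
  split_ifs <;> first | lia | simp [div_eq_mul_inv, mul_assoc, mul_comm]

lemma qBin_succ_eq_mul_invPoch (x : RatFunc ℚ) (n : ℕ) (k : ℤ) :
    qBin x (n + 1) k =
      qPoch x n * (1 - x ^ ((n : ℤ) + 1)) * invPoch x k * invPoch x (n + 1 - k) := by
  rw [qBin_eq_mul_invPoch, show ((n : ℤ) + 1).toNat = n + 1 by lia, qPoch_succ]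
  norm_cast

lemma qBin_eq_add_zpow_sub_mul (hx₀ : x ≠ 0) (hx : ¬IsOfFinOrder x) {n : ℤ} (hn : n ≠ 0) (k : ℤ) :
    qBin x n k = qBin x (n - 1) k + x ^ (n - k) * qBin x (n - 1) (k - 1) := by
  rcases hn.lt_or_gt with hn | hn
  · simp (disch := lia) only [qBin_of_not, mul_zero, add_zero]
  · obtain ⟨m, rfl⟩ : ∃ m : ℕ, n = m + 1 := ⟨(n - 1).toNat, by lia⟩
    have hpow : x ^ ((m : ℤ) + 1) = x ^ ((m : ℤ) + 1 - k) * x ^ k := by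
      rw [← zpow_add₀ hx₀, sub_add_cancel]
    rw [qBin_succ_eq_mul_invPoch, add_sub_cancel_right, qBin_eq_mul_invPoch, qBin_eq_mul_invPoch,
      show (m : ℤ) - k = m + 1 - k - 1 by ring, show (m : ℤ) - (k - 1) = m + 1 - k by ring,
      invPoch_sub_one hx, invPoch_sub_one hx, hpow, Int.toNat_natCast]
    ring

lemma qBin_sub_self (n k : ℤ) : qBin x n (n - k) = qBin x n k := by
  by_cases h : 0 ≤ k ∧ k ≤ n
  · rw [qBin_eq_mul_invPoch, qBin_eq_mul_invPoch, sub_sub_cancel, mul_right_comm]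
  · rw [qBin_of_not h, qBin_of_not (by lia)]

lemma qBin_eq_add_zpow_mul (hx₀ : x ≠ 0) (hx : ¬IsOfFinOrder x) {n : ℤ} (hn : n ≠ 0) (k : ℤ) :
    qBin x n k = qBin x (n - 1) (k - 1) + x ^ k * qBin x (n - 1) k := by
  rw [← qBin_sub_self, qBin_eq_add_zpow_sub_mul hx₀ hx hn, sub_sub_cancel,
    ← qBin_sub_self (n - 1) (k - 1), ← qBin_sub_self (n - 1) k,
    show n - 1 - (k - 1) = n - k by ring, show n - 1 - k = n - k - 1 by ring]

end GaussianBinomial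

section FermionicSum

variable {s x : RatFunc ℚ}

/-- The summand, at `p = (m, n)`, of the double sum over products of two Gaussian binomials. -/
noncomputable def fermionicTerm (s : RatFunc ℚ) (L : ℤ) (p : ℤ × ℤ) : RatFunc ℚ :=
  s ^ (p.1 ^ 2 + p.2 ^ 2) * qBin (s ^ 2) (L - p.1) p.2 * qBin (s ^ 2) p.2 p.1

/-- The double sum over products of two Gaussian binomials, taken over all of `ℤ × ℤ` so that the
summation indices can be translated. -/
noncomputable def fermionicSum (s : RatFunc ℚ) (L : ℤ) : RatFunc ℚ :=
  ∑ᶠ p, fermionicTerm s L p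

lemma mem_Icc_of_fermionicTerm_ne_zero {L : ℤ} {p : ℤ × ℤ} (hp : fermionicTerm s L p ≠ 0) :
    p ∈ Icc (0 : ℤ) L ×ˢ Icc (0 : ℤ) L := by
  have h₁ : 0 ≤ p.2 ∧ p.2 ≤ L - p.1 := by
    by_contra h
    simp [fermionicTerm, qBin_of_not h] at hp
  have h₂ : 0 ≤ p.1 ∧ p.1 ≤ p.2 := by
    by_contra h
    simp [fermionicTerm, qBin_of_not h] at hp
  simp only [mem_product, mem_Icc]
  lia

@[fun_prop]
lemma hasFiniteSupport_fermionicTerm (s : RatFunc ℚ) (L : ℤ) :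
    (fermionicTerm s L).HasFiniteSupport :=
  (finite_toSet _).subset fun _ => mem_Icc_of_fermionicTerm_ne_zero

lemma fermionicSum_eq_sum_range (s : RatFunc ℚ) (L : ℕ) :
    fermionicSum s L = ∑ m ∈ range (L + 1), ∑ n ∈ range (L + 1),
      s ^ (m ^ 2 + n ^ 2) * qBin (s ^ 2) ((L : ℤ) - m) n * qBin (s ^ 2) n m := by
  have hsub : Function.support (fermionicTerm s L) ⊆ ↑(Icc (0 : ℤ) L ×ˢ Icc (0 : ℤ) L) :=
    fun _ => mem_Icc_of_fermionicTerm_ne_zero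
  rw [fermionicSum, finsum_eq_sum_of_support_subset _ hsub, sum_product, ← sum_range_natCast]
  refine sum_congr rfl fun m _ => ?_
  rw [← sum_range_natCast]
  refine sum_congr rfl fun n _ => ?_
  simp only [fermionicTerm]
  norm_cast

lemma qBin_mul_qBin_eq_add (hx₀ : x ≠ 0) (hx : ¬IsOfFinOrder x) {L : ℤ} (hL : 1 ≤ L) (m n : ℤ) :
    qBin x (L - m) n * qBin x n m =
      qBin x (L - 1 - m) n * qBin x n m +
        x ^ (L - n) * qBin x (L - 1 - m) (n - 1) * qBin x (n - 1) m +
        x ^ (L - m - n) * qBin x (L - 1 - m) (n - 1) * qBin x (n - 1) (m - 1) := by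
  have hfst : qBin x (L - m) n * qBin x n m =
      (qBin x (L - 1 - m) n + x ^ (L - m - n) * qBin x (L - 1 - m) (n - 1)) * qBin x n m := by
    rcases eq_or_ne (L - m) 0 with hm | hm
    · rcases eq_or_ne n 0 with rfl | hn
      · simp (disch := lia) only [qBin_of_not, mul_zero]
      · simp (disch := lia) only [qBin_of_not, mul_zero, zero_mul, add_zero]
    · rw [qBin_eq_add_zpow_sub_mul hx₀ hx hm, sub_right_comm L m 1]
  have hsnd : qBin x (L - 1 - m) (n - 1) * qBin x n m =
      qBin x (L - 1 - m) (n - 1) * (qBin x (n - 1) (m - 1) + x ^ m * qBin x (n - 1) m) := by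
    rcases eq_or_ne n 0 with rfl | hn
    · simp (disch := lia) only [qBin_of_not, zero_mul]
    · rw [qBin_eq_add_zpow_mul hx₀ hx hn]
  have hpow : x ^ (L - n) = x ^ (L - m - n) * x ^ m := by
    rw [← zpow_add₀ hx₀]
    ring_nf
  rw [hpow]
  linear_combination hfst + x ^ (L - m - n) * hsnd

lemma fermionicTerm_eq_add (hs₀ : s ≠ 0) (hs : ¬IsOfFinOrder s) {L : ℤ} (hL : 1 ≤ L) (p : ℤ × ℤ) :
    fermionicTerm s L p = fermionicTerm s (L - 1) p +
      s ^ (2 * L - 1) * fermionicTerm s (L - 1) (p - (0, 1)) +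
      s ^ (2 * L - 2) * fermionicTerm s (L - 2) (p - (1, 1)) := by
  obtain ⟨m, n⟩ := p
  have hpow₁ : s ^ (m ^ 2 + n ^ 2) * (s ^ 2) ^ (L - n) =
      s ^ (2 * L - 1) * s ^ (m ^ 2 + (n - 1) ^ 2) := by
    rw [sq_zpow, ← zpow_add₀ hs₀, ← zpow_add₀ hs₀]
    ring_nf
  have hpow₂ : s ^ (m ^ 2 + n ^ 2) * (s ^ 2) ^ (L - m - n) =
      s ^ (2 * L - 2) * s ^ ((m - 1) ^ 2 + (n - 1) ^ 2) := by
    rw [sq_zpow, ← zpow_add₀ hs₀, ← zpow_add₀ hs₀]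
    ring_nf
  simp only [fermionicTerm, Prod.mk_sub_mk, sub_zero]
  rw [mul_assoc, qBin_mul_qBin_eq_add (pow_ne_zero 2 hs₀) (not_isOfFinOrder_sq hs) hL,
    show L - 2 - (m - 1) = L - 1 - m by ring]
  linear_combination
    qBin (s ^ 2) (L - 1 - m) (n - 1) * qBin (s ^ 2) (n - 1) m * hpow₁ +
      qBin (s ^ 2) (L - 1 - m) (n - 1) * qBin (s ^ 2) (n - 1) (m - 1) * hpow₂

lemma fermionicSum_eq_add (hs₀ : s ≠ 0) (hs : ¬IsOfFinOrder s) {L : ℤ} (hL : 1 ≤ L) :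
    fermionicSum s L = (1 + s ^ (2 * L - 1)) * fermionicSum s (L - 1) +
      s ^ (2 * L - 2) * fermionicSum s (L - 2) := by
  have hshift (N : ℤ) (c : ℤ × ℤ) : ∑ᶠ p, fermionicTerm s N (p - c) = fermionicSum s N :=
    finsum_comp_equiv (Equiv.subRight c)
  have hfin (N : ℤ) (c : ℤ × ℤ) : (fun p => fermionicTerm s N (p - c)).HasFiniteSupport :=
    (hasFiniteSupport_fermionicTerm s N).fun_comp_of_injective sub_left_injective
  calc fermionicSum s L
      = ∑ᶠ p, (fermionicTerm s (L - 1) p +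
          s ^ (2 * L - 1) * fermionicTerm s (L - 1) (p - (0, 1)) +
          s ^ (2 * L - 2) * fermionicTerm s (L - 2) (p - (1, 1))) :=
        finsum_congr (fermionicTerm_eq_add hs₀ hs hL)
    _ = fermionicSum s (L - 1) + s ^ (2 * L - 1) * fermionicSum s (L - 1) +
          s ^ (2 * L - 2) * fermionicSum s (L - 2) := by
        rw [finsum_add_distrib (by fun_prop) (by fun_prop),
          finsum_add_distrib (by fun_prop) (by fun_prop), ← mul_finsum, ← mul_finsum,
          hshift, hshift, fermionicSum]
    _ = _ := by ring

end FermionicSum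

section ReducedTrinomial

variable {s : RatFunc ℚ}

/-- The summand of `reducedTrinomial`, indexed by `k = (N - a - r) / 2`. -/
noncomputable def reducedTrinomialTerm (s : RatFunc ℚ) (n N a k : ℤ) : RatFunc ℚ :=
  s ^ ((N - a - 2 * k) * (N - a - 2 * k - n)) *
    (invPoch (s ^ 2) k * invPoch (s ^ 2) (k + a) * invPoch (s ^ 2) (N - a - 2 * k))

/-- The `q`-trinomial coefficient `T_n(N, a)` divided by `(q)_N`, in terms of `s = q^{1/2}`.
It is the coefficient of `t^N z^a` in `(-t q^{(1-n)/2}; q)_∞ / ((tz; q)_∞ (t/z; q)_∞)`. -/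
noncomputable def reducedTrinomial (s : RatFunc ℚ) (n N a : ℤ) : RatFunc ℚ :=
  ∑ᶠ k, reducedTrinomialTerm s n N a k

lemma nonneg_of_reducedTrinomialTerm_ne_zero {n N a k : ℤ}
    (h : reducedTrinomialTerm s n N a k ≠ 0) : 0 ≤ k ∧ 0 ≤ k + a ∧ 0 ≤ N - a - 2 * k := by
  simp only [reducedTrinomialTerm, mul_ne_zero_iff] at h
  obtain ⟨-, ⟨hk, hka⟩, hr⟩ := h
  exact ⟨nonneg_of_invPoch_ne_zero hk, nonneg_of_invPoch_ne_zero hka, nonneg_of_invPoch_ne_zero hr⟩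

@[fun_prop]
lemma hasFiniteSupport_reducedTrinomialTerm (s : RatFunc ℚ) (n N a : ℤ) :
    (reducedTrinomialTerm s n N a).HasFiniteSupport := by
  refine (Set.finite_Icc 0 (N - a)).subset fun k hk => ?_
  have := nonneg_of_reducedTrinomialTerm_ne_zero hk
  exact ⟨by lia, by lia⟩

lemma reducedTrinomial_neg (s : RatFunc ℚ) (n N a : ℤ) :
    reducedTrinomial s n N (-a) = reducedTrinomial s n N a := by
  rw [reducedTrinomial, ← finsum_comp_equiv (Equiv.addRight a)]
  refine finsum_congr fun k => ?_
  rw [reducedTrinomialTerm, reducedTrinomialTerm, Equiv.coe_addRight, add_neg_cancel_right,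
    show N - -a - 2 * (k + a) = N - a - 2 * k by ring, mul_comm (invPoch _ (k + a))]

-- Corresponds to multiplying the generating function by `1 - tz`.
lemma zpow_add_mul_reducedTrinomial (hs₀ : s ≠ 0) (hs : ¬IsOfFinOrder s) (n N a : ℤ) :
    s ^ (N + a) * reducedTrinomial s (n + 1) N a =
      reducedTrinomial s n N a - reducedTrinomial s n (N - 1) (a - 1) := by
  simp only [reducedTrinomial]
  rw [mul_finsum, ← finsum_sub_distrib (by fun_prop) (by fun_prop)]
  refine finsum_congr fun k => ?_
  have hpow : s ^ (N + a) * s ^ ((N - a - 2 * k) * (N - a - 2 * k - (n + 1))) =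
      s ^ ((N - a - 2 * k) * (N - a - 2 * k - n)) * (s ^ 2) ^ (k + a) := by
    rw [sq_zpow, ← zpow_add₀ hs₀, ← zpow_add₀ hs₀]
    ring_nf
  rw [reducedTrinomialTerm, reducedTrinomialTerm, reducedTrinomialTerm,
    show N - 1 - (a - 1) - 2 * k = N - a - 2 * k by ring, show k + (a - 1) = k + a - 1 by ring,
    invPoch_sub_one (not_isOfFinOrder_sq hs)]
  linear_combination
    invPoch (s ^ 2) k * invPoch (s ^ 2) (k + a) * invPoch (s ^ 2) (N - a - 2 * k) * hpow

lemma zpow_sub_mul_reducedTrinomial (hs₀ : s ≠ 0) (hs : ¬IsOfFinOrder s) (n N a : ℤ) :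
    s ^ (N - a) * reducedTrinomial s (n + 1) N a =
      reducedTrinomial s n N a - reducedTrinomial s n (N - 1) (a + 1) := by
  have h := zpow_add_mul_reducedTrinomial hs₀ hs n N (-a)
  rwa [← sub_eq_add_neg, ← neg_add', reducedTrinomial_neg, reducedTrinomial_neg,
    reducedTrinomial_neg] at h

-- Corresponds to splitting off the first factor of `(-t q^{-(n+1)/2}; q)_∞`.
lemma reducedTrinomial_add_two (hs₀ : s ≠ 0) (hs : ¬IsOfFinOrder s) (n N a : ℤ) :
    reducedTrinomial s (n + 2) N a =
      reducedTrinomial s n N a + s ^ (-(n + 1)) * reducedTrinomial s n (N - 1) a := by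
  simp only [reducedTrinomial]
  rw [mul_finsum, ← finsum_add_distrib (by fun_prop) (by fun_prop)]
  refine finsum_congr fun k => ?_
  obtain ⟨r, hr⟩ : ∃ r, r = N - a - 2 * k := ⟨_, rfl⟩
  have hpow₁ : s ^ (-(n + 1)) * s ^ ((r - 1) * (r - 1 - n)) = s ^ (r * (r - (n + 2))) := by
    rw [← zpow_add₀ hs₀]
    ring_nf
  have hpow₂ : s ^ (r * (r - (n + 2))) * (s ^ 2) ^ r = s ^ (r * (r - n)) := by
    rw [sq_zpow, ← zpow_add₀ hs₀]
    ring_nf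
  rw [reducedTrinomialTerm, reducedTrinomialTerm, reducedTrinomialTerm, ← hr,
    show N - 1 - a - 2 * k = r - 1 by lia, invPoch_sub_one (not_isOfFinOrder_sq hs)]
  linear_combination invPoch (s ^ 2) k * invPoch (s ^ 2) (k + a) * invPoch (s ^ 2) r *
    (hpow₂ - (1 - (s ^ 2) ^ r) * hpow₁)

lemma reducedTrinomial_one (hs₀ : s ≠ 0) (hs : ¬IsOfFinOrder s) (N a : ℤ) :
    reducedTrinomial s 1 N a =
      reducedTrinomial s (-1) N a + reducedTrinomial s (-1) (N - 1) a := by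
  simpa using reducedTrinomial_add_two hs₀ hs (-1) N a

lemma zpow_add_mul_reducedTrinomial_zero (hs₀ : s ≠ 0) (hs : ¬IsOfFinOrder s) (N a : ℤ) :
    s ^ (N + a) * reducedTrinomial s 0 N a =
      reducedTrinomial s (-1) N a - reducedTrinomial s (-1) (N - 1) (a - 1) := by
  simpa using zpow_add_mul_reducedTrinomial hs₀ hs (-1) N a

lemma zpow_sub_mul_reducedTrinomial_zero (hs₀ : s ≠ 0) (hs : ¬IsOfFinOrder s) (N a : ℤ) :
    s ^ (N - a) * reducedTrinomial s 0 N a =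
      reducedTrinomial s (-1) N a - reducedTrinomial s (-1) (N - 1) (a + 1) := by
  simpa using zpow_sub_mul_reducedTrinomial hs₀ hs (-1) N a

lemma zpow_add_mul_reducedTrinomial_one (hs₀ : s ≠ 0) (hs : ¬IsOfFinOrder s) (N a : ℤ) :
    s ^ (N + a) * reducedTrinomial s 1 N a =
      reducedTrinomial s 0 N a - reducedTrinomial s 0 (N - 1) (a - 1) := by
  simpa using zpow_add_mul_reducedTrinomial hs₀ hs 0 N a

lemma reducedTrinomial_one_sub (hs₀ : s ≠ 0) (hs : ¬IsOfFinOrder s) (N a : ℤ) :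
    reducedTrinomial s 1 N a - s ^ (N - a) * reducedTrinomial s 0 N a =
      reducedTrinomial s 1 (N - 1) a + s ^ (N + a) * reducedTrinomial s 0 (N - 1) (a + 1) := by
  have hsub := zpow_sub_mul_reducedTrinomial_zero hs₀ hs N a
  have hadd := zpow_add_mul_reducedTrinomial_zero hs₀ hs (N - 1) (a + 1)
  rw [add_sub_cancel_right, sub_add_add_cancel] at hadd
  rw [reducedTrinomial_one hs₀ hs, reducedTrinomial_one hs₀ hs (N - 1)]
  linear_combination -hsub - hadd

end ReducedTrinomial

section Trinomial

variable {s : RatFunc ℚ}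

lemma qT_eq_zero_of_lt_abs (s : RatFunc ℚ) (n : ℤ) {L : ℕ} {a : ℤ} (h : (L : ℤ) < |a|) :
    qT s n L a = 0 :=
  sum_eq_zero fun _ _ => if_neg fun hr => by lia

lemma hasFiniteSupport_qT (s : RatFunc ℚ) (n : ℤ) (L : ℕ) : (qT s n L).HasFiniteSupport := by
  refine (Set.finite_Icc (-(L : ℤ)) L).subset fun a ha => abs_le.1 ?_
  contrapose! ha
  simpa using qT_eq_zero_of_lt_abs s n ha

lemma qT_eq_qPoch_mul_reducedTrinomial (s : RatFunc ℚ) (n : ℤ) (L : ℕ) (a : ℤ) :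
    qT s n L a = qPoch (s ^ 2) L * reducedTrinomial s n L a := by
  classical
  let S : Finset ℕ := {r ∈ range (L + 1) | Even ((L : ℤ) - a - r) ∧ (r : ℤ) ≤ L - |a|}
  let k (r : ℕ) : ℤ := ((L : ℤ) - a - r) / 2
  have hsupp : Function.support (reducedTrinomialTerm s n L a) ⊆ ↑(S.image k) := by
    intro i hi
    have hi := nonneg_of_reducedTrinomialTerm_ne_zero hi
    simp only [coe_image, Set.mem_image, mem_coe, S, k, mem_filter, mem_range]
    have hr : L - a - 2 * i ≤ L - |a| := by
      rcases abs_cases a with h | h <;> lia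
    exact ⟨((L : ℤ) - a - 2 * i).toNat, ⟨by lia, ⟨i, by lia⟩, by lia⟩, by lia⟩
  have hinj : Set.InjOn k S := by
    intro r hr r' hr' (h : ((L : ℤ) - a - r) / 2 = ((L : ℤ) - a - r') / 2)
    obtain ⟨-, ⟨i, hi⟩, -⟩ := mem_filter.1 hr
    obtain ⟨-, ⟨i', hi'⟩, -⟩ := mem_filter.1 hr'
    lia
  rw [reducedTrinomial, finsum_eq_sum_of_support_subset _ hsupp, sum_image hinj, qT, ← sum_filter,
    mul_sum]
  refine sum_congr rfl fun r hr => ?_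
  obtain ⟨-, ⟨i, hi⟩, hra⟩ := mem_filter.1 hr
  have hi₀ : 0 ≤ i ∧ 0 ≤ i + a := by
    rcases abs_cases a with h | h <;> lia
  simp only [k, reducedTrinomialTerm]
  rw [show ((L : ℤ) - a - r) / 2 = i by lia, show ((L : ℤ) + a - r) / 2 = i + a by lia,
    show (L : ℤ) - a - 2 * i = r by lia, invPoch, invPoch, if_pos (by lia), if_pos (by lia),
    invPoch_natCast, div_eq_mul_inv, mul_inv, mul_inv]
  ring

lemma qT_neg (s : RatFunc ℚ) (n : ℤ) (L : ℕ) (a : ℤ) : qT s n L (-a) = qT s n L a := by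
  simp only [qT_eq_qPoch_mul_reducedTrinomial, reducedTrinomial_neg]

lemma qT_one_sub (hs₀ : s ≠ 0) (hs : ¬IsOfFinOrder s) (L : ℕ) (a : ℤ) :
    qT s 1 L a - qT s 1 L (a + 1) =
      s ^ (L - a) * qT s 0 L a - s ^ (L + 1 + a) * qT s 0 L (a + 1) := by
  have hsub := zpow_sub_mul_reducedTrinomial_zero hs₀ hs L a
  have hadd := zpow_add_mul_reducedTrinomial_zero hs₀ hs L (a + 1)
  rw [add_sub_cancel_right, ← add_assoc, add_right_comm] at hadd
  simp only [qT_eq_qPoch_mul_reducedTrinomial, reducedTrinomial_one hs₀ hs]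
  linear_combination qPoch (s ^ 2) L * (hadd - hsub)

lemma qPoch_sq_succ (hs₀ : s ≠ 0) (L : ℕ) (a : ℤ) :
    qPoch (s ^ 2) (L + 1) = qPoch (s ^ 2) L * (1 - s ^ (L + 1 + a) * s ^ (L + 1 - a)) := by
  have hpow : (s ^ 2) ^ (L + 1) = s ^ (L + 1 + a) * s ^ (L + 1 - a) := by
    rw [← zpow_natCast (s ^ 2), sq_zpow, ← zpow_add₀ hs₀]
    push_cast
    ring_nf
  rw [qPoch_succ, hpow]

lemma qT_zero_succ (hs₀ : s ≠ 0) (hs : ¬IsOfFinOrder s) (L : ℕ) (a : ℤ) :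
    qT s 0 (L + 1) a = qT s 0 L (a - 1) + s ^ (L + 1 + a) * qT s 1 L a +
      s ^ (L + 1 + a) * s ^ (L + 1 + a) * qT s 0 L (a + 1) := by
  have hsplit := zpow_add_mul_reducedTrinomial_one hs₀ hs (L + 1) a
  have hsub := reducedTrinomial_one_sub hs₀ hs (L + 1) a
  rw [add_sub_cancel_right] at hsplit hsub
  simp only [qT_eq_qPoch_mul_reducedTrinomial, qPoch_sq_succ hs₀ L a, Nat.cast_add_one]
  linear_combination qPoch (s ^ 2) L * (s ^ ((L : ℤ) + 1 + a) * hsub - hsplit)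

lemma qT_one_succ (hs₀ : s ≠ 0) (hs : ¬IsOfFinOrder s) (L : ℕ) (a : ℤ) :
    qT s 1 (L + 1) a = qT s 1 L a + s ^ (L + 1 + a) * qT s 0 L (a + 1) +
      s ^ (L + 1 - a) * qT s 0 L (a - 1) := by
  have hsplit := zpow_add_mul_reducedTrinomial_one hs₀ hs (L + 1) a
  have hsub := reducedTrinomial_one_sub hs₀ hs (L + 1) a
  rw [add_sub_cancel_right] at hsplit hsub
  simp only [qT_eq_qPoch_mul_reducedTrinomial, qPoch_sq_succ hs₀ L a, Nat.cast_add_one]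
  linear_combination qPoch (s ^ 2) L * (hsub - s ^ ((L : ℤ) + 1 - a) * hsplit)

lemma qT_one_succ_sub (hs₀ : s ≠ 0) (hs : ¬IsOfFinOrder s) (L : ℕ) (a : ℤ) :
    qT s 1 (L + 1) a - qT s 1 (L + 1) (a + 1) =
      s ^ (L + 1 - a) * qT s 0 L (a - 1) - s ^ (L + 2 + a) * qT s 0 L (a + 2) := by
  have h₁ := qT_one_succ hs₀ hs L a
  have h₂ := qT_one_succ hs₀ hs L (a + 1)
  have h := qT_one_sub hs₀ hs L a
  rw [show (L : ℤ) + 1 + (a + 1) = L + 2 + a by ring, add_sub_add_right_eq_sub, add_assoc a,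
    one_add_one_eq_two, add_sub_cancel_right] at h₂
  linear_combination h₁ - h₂ + h

end Trinomial

section ThetaSum

variable {s : RatFunc ℚ}

/-- The general term `(-1)^j s^(4j² + bj)` of a theta series. -/
noncomputable def thetaWeight (s : RatFunc ℚ) (b j : ℤ) : RatFunc ℚ :=
  (-1) ^ j * s ^ (4 * j ^ 2 + b * j)

/-- The sum of the `q`-trinomials `T_n(L, a)` over the residue class `a ≡ c` modulo `4`, weighted by
the terms of a theta series. -/
noncomputable def thetaSum (s : RatFunc ℚ) (n : ℤ) (L : ℕ) (b c : ℤ) : RatFunc ℚ :=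
  ∑ᶠ j, thetaWeight s b j * qT s n L (4 * j + c)

lemma thetaWeight_neg (s : RatFunc ℚ) (b j : ℤ) : thetaWeight s b (-j) = thetaWeight s (-b) j := by
  have hsign : (-1 : RatFunc ℚ) ^ (-j) = (-1) ^ j := by
    rw [zpow_neg, ← inv_zpow, inv_neg_one]
  rw [thetaWeight, thetaWeight, hsign, neg_sq, mul_neg, neg_mul]

lemma thetaWeight_add_one (hs₀ : s ≠ 0) (b j : ℤ) :
    thetaWeight s b (j + 1) = -s ^ (b + 4) * thetaWeight s (b + 8) j := by
  have hpow : s ^ (4 * (j + 1) ^ 2 + b * (j + 1)) =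
      s ^ (b + 4) * s ^ (4 * j ^ 2 + (b + 8) * j) := by
    rw [← zpow_add₀ hs₀]
    ring_nf
  rw [thetaWeight, thetaWeight, hpow, zpow_add_one₀ (neg_ne_zero.2 one_ne_zero)]
  ring

lemma thetaWeight_mul_zpow_add (hs₀ : s ≠ 0) (b c e j : ℤ) :
    thetaWeight s b j * s ^ (e + (4 * j + c)) = s ^ (e + c) * thetaWeight s (b + 4) j := by
  rw [thetaWeight, thetaWeight, mul_assoc, ← zpow_add₀ hs₀, mul_left_comm, ← zpow_add₀ hs₀]
  ring_nf

lemma thetaWeight_mul_zpow_sub (hs₀ : s ≠ 0) (b c e j : ℤ) :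
    thetaWeight s b j * s ^ (e - (4 * j + c)) = s ^ (e - c) * thetaWeight s (b - 4) j := by
  rw [thetaWeight, thetaWeight, mul_assoc, ← zpow_add₀ hs₀, mul_left_comm, ← zpow_add₀ hs₀]
  ring_nf

@[fun_prop]
lemma hasFiniteSupport_thetaWeight_mul_qT (s : RatFunc ℚ) (n : ℤ) (L : ℕ) (b c : ℤ) :
    (fun j => thetaWeight s b j * qT s n L (4 * j + c)).HasFiniteSupport :=
  ((hasFiniteSupport_qT s n L).fun_comp_of_injective fun i j h => by lia).fun_mul_right _

lemma thetaSum_neg (s : RatFunc ℚ) (n : ℤ) (L : ℕ) (b c : ℤ) :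
    thetaSum s n L (-b) (-c) = thetaSum s n L b c := by
  rw [thetaSum, thetaSum, ← finsum_comp_equiv (Equiv.neg ℤ)]
  refine finsum_congr fun j => ?_
  rw [Equiv.neg_apply, thetaWeight_neg, neg_neg, mul_neg, ← neg_add, qT_neg]

lemma thetaSum_eq_neg_zpow_mul (hs₀ : s ≠ 0) (n : ℤ) (L : ℕ) (b c : ℤ) :
    thetaSum s n L b c = -s ^ (b + 4) * thetaSum s n L (b + 8) (c + 4) := by
  rw [thetaSum, thetaSum, mul_finsum, ← finsum_comp_equiv (Equiv.addRight 1)]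
  refine finsum_congr fun j => ?_
  rw [Equiv.coe_addRight, thetaWeight_add_one hs₀, show 4 * (j + 1) + c = 4 * j + (c + 4) by ring,
    mul_assoc]

lemma thetaSum_zero_succ (hs₀ : s ≠ 0) (hs : ¬IsOfFinOrder s) (L : ℕ) (b c : ℤ) :
    thetaSum s 0 (L + 1) b c = thetaSum s 0 L b (c - 1) +
      s ^ (L + 1 + c) * thetaSum s 1 L (b + 4) c +
      s ^ (L + 1 + c) * s ^ (L + 1 + c) * thetaSum s 0 L (b + 8) (c + 1) := by
  simp only [thetaSum]
  rw [mul_finsum, mul_finsum, ← finsum_add_distrib (by fun_prop) (by fun_prop),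
    ← finsum_add_distrib (by fun_prop) (by fun_prop)]
  refine finsum_congr fun j => ?_
  have h₁ := thetaWeight_mul_zpow_add hs₀ b c (L + 1) j
  have h₂ := thetaWeight_mul_zpow_add hs₀ (b + 4) c (L + 1) j
  rw [add_assoc b, show (4 : ℤ) + 4 = 8 by rfl] at h₂
  rw [qT_zero_succ hs₀ hs, add_sub_assoc, add_assoc (4 * j) c 1]
  linear_combination qT s 1 L (4 * j + c) * h₁ + qT s 0 L (4 * j + (c + 1)) *
    (s ^ ((L : ℤ) + 1 + (4 * j + c)) * h₁ + s ^ ((L : ℤ) + 1 + c) * h₂)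

lemma thetaSum_zero_succ' (hs₀ : s ≠ 0) (hs : ¬IsOfFinOrder s) (L : ℕ) (b c : ℤ) :
    thetaSum s 0 (L + 1) b c = thetaSum s 0 L b (c + 1) +
      s ^ (L + 1 - c) * thetaSum s 1 L (b - 4) c +
      s ^ (L + 1 - c) * s ^ (L + 1 - c) * thetaSum s 0 L (b - 8) (c - 1) := by
  have h := thetaSum_zero_succ hs₀ hs L (-b) (-c)
  rwa [show -b + 4 = -(b - 4) by ring, show -b + 8 = -(b - 8) by ring, ← neg_add',
    show -c + 1 = -(c - 1) by ring, thetaSum_neg, thetaSum_neg, thetaSum_neg, thetaSum_neg,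
    ← sub_eq_add_neg] at h

lemma thetaSum_one_sub (hs₀ : s ≠ 0) (hs : ¬IsOfFinOrder s) (L : ℕ) (b c : ℤ) :
    thetaSum s 1 L b c - thetaSum s 1 L b (c + 1) =
      s ^ (L - c) * thetaSum s 0 L (b - 4) c -
        s ^ (L + 1 + c) * thetaSum s 0 L (b + 4) (c + 1) := by
  simp only [thetaSum]
  rw [mul_finsum, mul_finsum, ← finsum_sub_distrib (by fun_prop) (by fun_prop),
    ← finsum_sub_distrib (by fun_prop) (by fun_prop)]
  refine finsum_congr fun j => ?_
  have h := qT_one_sub hs₀ hs L (4 * j + c)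
  have hsub := thetaWeight_mul_zpow_sub hs₀ b c L j
  have hadd := thetaWeight_mul_zpow_add hs₀ b c (L + 1) j
  rw [add_assoc (4 * j)] at h
  linear_combination thetaWeight s b j * h + qT s 0 L (4 * j + c) * hsub -
    qT s 0 L (4 * j + (c + 1)) * hadd

lemma thetaSum_one_succ_sub (hs₀ : s ≠ 0) (hs : ¬IsOfFinOrder s) (L : ℕ) (b c : ℤ) :
    thetaSum s 1 (L + 1) b c - thetaSum s 1 (L + 1) b (c + 1) =
      s ^ (L + 1 - c) * thetaSum s 0 L (b - 4) (c - 1) -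
        s ^ (L + 2 + c) * thetaSum s 0 L (b + 4) (c + 2) := by
  simp only [thetaSum]
  rw [mul_finsum, mul_finsum, ← finsum_sub_distrib (by fun_prop) (by fun_prop),
    ← finsum_sub_distrib (by fun_prop) (by fun_prop)]
  refine finsum_congr fun j => ?_
  have h := qT_one_succ_sub hs₀ hs L (4 * j + c)
  have hsub := thetaWeight_mul_zpow_sub hs₀ b c (L + 1) j
  have hadd := thetaWeight_mul_zpow_add hs₀ b c (L + 2) j
  rw [add_assoc (4 * j), add_assoc (4 * j), add_sub_assoc (4 * j)] at h
  linear_combination thetaWeight s b j * h + qT s 0 L (4 * j + (c - 1)) * hsub -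
    qT s 0 L (4 * j + (c + 2)) * hadd

end ThetaSum

section BosonicSum

variable {s : RatFunc ℚ}

/-- The alternating sum over `j : ℤ` of `q`-trinomials `T_0(L, 4j)` and `T_0(L, 4j + 1)`. -/
noncomputable def bosonicSum (s : RatFunc ℚ) (L : ℕ) : RatFunc ℚ :=
  thetaSum s 0 L 1 0 + thetaSum s 0 L 1 1

lemma bosonicSum_eq_sum_Icc (s : RatFunc ℚ) (L : ℕ) :
    bosonicSum s L = ∑ j ∈ Icc (-(L : ℤ)) L,
      (-1) ^ j * s ^ (4 * j ^ 2 + j) * (qT s 0 L (4 * j) + qT s 0 L (4 * j + 1)) := by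
  have hsum {c : ℤ} (hc : 0 ≤ c ∧ c ≤ 1) : thetaSum s 0 L 1 c =
      ∑ j ∈ Icc (-(L : ℤ)) L, thetaWeight s 1 j * qT s 0 L (4 * j + c) := by
    refine finsum_eq_sum_of_support_subset _ fun j hj => ?_
    by_contra hjL
    rw [coe_Icc, Set.mem_Icc] at hjL
    refine hj (mul_eq_zero_of_right _ (qT_eq_zero_of_lt_abs s 0 (lt_abs.2 ?_)))
    lia
  rw [bosonicSum, hsum (by norm_num), hsum (by norm_num), ← sum_add_distrib]
  simp only [thetaWeight, one_mul, add_zero, mul_add]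

lemma thetaSum_one_add_mul_thetaSum_one (hs₀ : s ≠ 0) (hs : ¬IsOfFinOrder s) (K : ℕ) :
    thetaSum s 1 (K + 1) (-3) 0 + s * thetaSum s 1 (K + 1) 5 1 =
      s ^ (K + 1) * bosonicSum s (K + 1) + s ^ K * bosonicSum s K -
        s ^ (K + 2) * thetaSum s 0 (K + 1) (-7) (-1) - s ^ (K + 4) * thetaSum s 0 (K + 1) 9 2 := by
  have h₁ : thetaSum s 1 (K + 1) (-3) (-3) - thetaSum s 1 (K + 1) (-3) (-2) =
      s ^ (K + 4) * thetaSum s 0 (K + 1) (-7) (-3) -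
        s ^ (K - 1 : ℤ) * thetaSum s 0 (K + 1) 1 (-2) := by
    simp only [← zpow_natCast]
    convert thetaSum_one_sub hs₀ hs (K + 1) (-3) (-3) using 4 <;> push_cast <;> ring_nf
  have h₂ : thetaSum s 1 (K + 1) (-3) (-2) - thetaSum s 1 (K + 1) (-3) (-1) =
      s ^ (K + 3) * thetaSum s 0 K (-7) (-3) - s ^ K * thetaSum s 0 K 1 0 := by
    simp only [← zpow_natCast]
    convert thetaSum_one_succ_sub hs₀ hs K (-3) (-2) using 4 <;> push_cast <;> ring_nf
  have h₃ : thetaSum s 1 (K + 1) (-3) (-1) - thetaSum s 1 (K + 1) (-3) 0 =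
      s ^ (K + 2) * thetaSum s 0 (K + 1) (-7) (-1) - s ^ (K + 1) * thetaSum s 0 (K + 1) 1 0 := by
    simp only [← zpow_natCast]
    convert thetaSum_one_sub hs₀ hs (K + 1) (-3) (-1) using 4 <;> push_cast <;> ring_nf
  have hshift₁ : thetaSum s 1 (K + 1) (-3) (-3) = -s * thetaSum s 1 (K + 1) 5 1 := by
    simpa using thetaSum_eq_neg_zpow_mul hs₀ 1 (K + 1) (-3) (-3)
  have hshift₂ : s ^ (K - 1 : ℤ) * thetaSum s 0 (K + 1) 1 (-2) =
      -s ^ (K + 4) * thetaSum s 0 (K + 1) 9 2 := by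
    have hpow : s ^ (K - 1 : ℤ) * s ^ (5 : ℤ) = s ^ (K + 4) := by
      rw [← zpow_add₀ hs₀, ← zpow_natCast]
      push_cast
      ring_nf
    rw [thetaSum_eq_neg_zpow_mul hs₀, ← hpow]
    norm_num [mul_assoc]
  have hshift₃ (L : ℕ) : s ^ 3 * thetaSum s 0 L (-7) (-3) = -thetaSum s 0 L 1 1 := by
    rw [thetaSum_eq_neg_zpow_mul hs₀]
    simp [hs₀]
  simp only [bosonicSum]
  linear_combination hshift₁ - h₁ - h₂ - h₃ + hshift₂ - s ^ (K + 1) * hshift₃ (K + 1) -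
    s ^ K * hshift₃ K

lemma bosonicSum_add_two (hs₀ : s ≠ 0) (hs : ¬IsOfFinOrder s) (K : ℕ) :
    bosonicSum s (K + 2) = (1 + s ^ (2 * K + 3)) * bosonicSum s (K + 1) +
      s ^ (2 * K + 2) * bosonicSum s K := by
  have h₀ : thetaSum s 0 (K + 2) 1 0 = thetaSum s 0 (K + 1) 1 1 +
      s ^ (K + 2) * thetaSum s 1 (K + 1) (-3) 0 +
      s ^ (K + 2) * s ^ (K + 2) * thetaSum s 0 (K + 1) (-7) (-1) := by
    simp only [← zpow_natCast]
    convert thetaSum_zero_succ' hs₀ hs (K + 1) 1 0 using 4 <;> push_cast <;> ring_nf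
  have h₁ : thetaSum s 0 (K + 2) 1 1 = thetaSum s 0 (K + 1) 1 0 +
      s ^ (K + 3) * thetaSum s 1 (K + 1) 5 1 +
      s ^ (K + 3) * s ^ (K + 3) * thetaSum s 0 (K + 1) 9 2 := by
    simp only [← zpow_natCast]
    convert thetaSum_zero_succ hs₀ hs (K + 1) 1 1 using 4 <;> push_cast <;> ring_nf
  have h := thetaSum_one_add_mul_thetaSum_one hs₀ hs K
  simp only [bosonicSum] at h ⊢
  linear_combination h₀ + h₁ + s ^ (K + 2) * h

end BosonicSum

section Identity

variable {s : RatFunc ℚ}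

lemma fermionicSum_zero_eq_bosonicSum (s : RatFunc ℚ) :
    fermionicSum s (0 : ℕ) = bosonicSum s 0 := by
  rw [fermionicSum_eq_sum_range, bosonicSum_eq_sum_Icc]
  simp [qBin, qT, qPoch, Int.even_iff]

lemma fermionicSum_one_eq_bosonicSum (hs : ¬IsOfFinOrder s) :
    fermionicSum s (1 : ℕ) = bosonicSum s 1 := by
  have h : 1 - s ^ 2 ≠ 0 := by
    simpa using one_sub_pow_succ_ne_zero hs 1
  rw [fermionicSum_eq_sum_range, bosonicSum_eq_sum_Icc,
    show Icc (-((1 : ℕ) : ℤ)) (1 : ℕ) = {-1, 0, 1} by decide]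
  simpa [qT, qBin, qPoch, sum_range_succ, Int.even_iff, h] using add_comm _ _

lemma fermionicSum_eq_bosonicSum (hs₀ : s ≠ 0) (hs : ¬IsOfFinOrder s) (L : ℕ) :
    fermionicSum s L = bosonicSum s L := by
  induction L using Nat.twoStepInduction with
  | zero => exact fermionicSum_zero_eq_bosonicSum s
  | one => exact fermionicSum_one_eq_bosonicSum hs
  | more K hK hK₁ =>
    rw [fermionicSum_eq_add hs₀ hs (by lia), bosonicSum_add_two hs₀ hs, ← hK, ← hK₁]
    simp only [← zpow_natCast]
    push_cast
    ring_nf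

theorem stmt12_general (hs₀ : s ≠ 0) (hs : ¬IsOfFinOrder s) (L : ℕ) :
    ∑ m ∈ range (L + 1), ∑ n ∈ range (L + 1),
        s ^ (m ^ 2 + n ^ 2) * qBin (s ^ 2) ((L : ℤ) - m) n * qBin (s ^ 2) n m =
      ∑ j ∈ Icc (-(L : ℤ)) L,
        (-1) ^ j * s ^ (4 * j ^ 2 + j) * (qT s 0 L (4 * j) + qT s 0 L (4 * j + 1)) := by
  rw [← fermionicSum_eq_sum_range, ← bosonicSum_eq_sum_Icc, fermionicSum_eq_bosonicSum hs₀ hs]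

lemma qq_ne_zero : qq ≠ 0 :=
  RatFunc.X_ne_zero

lemma not_isOfFinOrder_qq : ¬IsOfFinOrder qq := by
  rw [isOfFinOrder_iff_pow_eq_one]
  rintro ⟨n, hn, h⟩
  exact RatFunc.transcendental_X (K := ℚ)
    ⟨Polynomial.X ^ n - 1, Polynomial.X_pow_sub_C_ne_zero hn 1, by simpa [qq, sub_eq_zero] using h⟩

end Identity

theorem stmt12 (L : ℕ) :
    ∑ m ∈ Finset.range (L + 1), ∑ n ∈ Finset.range (L + 1),
        qq ^ (m ^ 2 + n ^ 2) * qBin (qq ^ 2) ((L : ℤ) - m) (n : ℤ) *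
          qBin (qq ^ 2) (n : ℤ) (m : ℤ) =
      ∑ j ∈ Finset.Icc (-(L : ℤ)) (L : ℤ),
        (-1 : RatFunc ℚ) ^ j * qq ^ (4 * j ^ 2 + j) *
          (qT qq 0 L (4 * j) + qT qq 0 L (4 * j + 1)) :=
  stmt12_general qq_ne_zero not_isOfFinOrder_qq L
end
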